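/- Translation correctness for the sliding-interval pattern 'whenever Ψ occurs, Ψ1 implies Ψ2 during following [a,b]': let π be a finite timed trace, Ψ, Ψ1, Ψ2 state predicates on S, and 0 ≤ a ≤ b ≤ k. Assume that for every index i with t_i ≤ t_0 + (k − b) there is an index m with t_m = t_i + a. Then π ⊨ G_{≤k−b}(Ψ ⟹ X_{≤a} G_{≤b−a} (Ψ1 ⟹ Ψ2)) if and only if for every index i with t_i ≤ t_0 + (k − b) at which Ψ(s_i) holds, every index j with t_i + a ≤ t_j ≤ t_i + b satisfies that Ψ1(s_j) implies Ψ2(s_j). -/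

import Mathlib

/-- A finite timed trace: states `s 0, …, s n` with strictly increasing
time stamps `t 0 < t 1 < ⋯ < t n`. -/
structure TTrace (S : Type*) where
  n : ℕ
  s : ℕ → S
  t : ℕ → ℝ
  mono : ∀ i, i < n → t i < t (i + 1)

/-- The suffix `π^i` of a timed trace. -/
def TTrace.suffix {S : Type*} (π : TTrace S) (i : ℕ) : TTrace S where
  n := π.n - i
  s := fun j => π.s (i + j)
  t := fun j => π.t (i + j)
  mono := fun j hj => π.mono (i + j) (by omega)

/-- A trace property is a predicate on timed traces. -/
abbrev TraceProp (S : Type*) := TTrace S → Prop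

/-- A state predicate regarded as a trace property: it holds on `π` iff it holds in `s 0`. -/
def statePred {S : Type*} (Ψ : S → Prop) : TraceProp S := fun π => Ψ (π.s 0)

/-- `π ⊨ G_{≤k} Φ` iff `π^i ⊨ Φ` for every index `i` with `t i ≤ t 0 + k`. -/
def Gle {S : Type*} (k : ℝ) (Φ : TraceProp S) : TraceProp S := fun π =>
  ∀ i, i ≤ π.n → π.t i ≤ π.t 0 + k → Φ (π.suffix i)

/-- `π ⊨ F_{≤k} Φ` iff `π^i ⊨ Φ` for some index `i` with `t i ≤ t 0 + k`. -/
def Fle {S : Type*} (k : ℝ) (Φ : TraceProp S) : TraceProp S := fun π =>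
  ∃ i, i ≤ π.n ∧ π.t i ≤ π.t 0 + k ∧ Φ (π.suffix i)

/-- `π ⊨ X_{≤k} Φ` iff `π^m ⊨ Φ` for `m` the largest index with `t m ≤ t 0 + k`. -/
noncomputable def Xle {S : Type*} (k : ℝ) (Φ : TraceProp S) : TraceProp S := fun π =>
  Φ (π.suffix (@Nat.findGreatest (fun i => π.t i ≤ π.t 0 + k) (Classical.decPred _) π.n))

def pImp {S : Type*} (Φ1 Φ2 : TraceProp S) : TraceProp S := fun π => Φ1 π → Φ2 π
def pNot {S : Type*} (Φ : TraceProp S) : TraceProp S := fun π => ¬ Φ π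
def pAnd {S : Type*} (Φ1 Φ2 : TraceProp S) : TraceProp S := fun π => Φ1 π ∧ Φ2 π
def pOr {S : Type*} (Φ1 Φ2 : TraceProp S) : TraceProp S := fun π => Φ1 π ∨ Φ2 π
def pTrue {S : Type*} : TraceProp S := fun _ => True
def pFalse {S : Type*} : TraceProp S := fun _ => False

namespace TTrace

variable {S : Type*} (π : TTrace S)

theorem strictMonoOn_t : StrictMonoOn π.t (Set.Iic π.n) :=
  strictMonoOn_of_lt_succ Set.ordConnected_Iic fun i _ _ hi => π.mono i (Nat.lt_of_succ_le hi)

theorem suffix_suffix (i j : ℕ) : (π.suffix i).suffix j = π.suffix (i + j) := by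
  simp only [suffix, Nat.sub_sub, Nat.add_assoc]

theorem isGreatest_of_t_eq {m : ℕ} {x : ℝ} (hm : m ≤ π.n) (hmx : π.t m = x) :
    IsGreatest {i | i ≤ π.n ∧ π.t i ≤ x} m :=
  ⟨⟨hm, hmx.le⟩, fun _ ⟨hi, hix⟩ => (π.strictMonoOn_t.le_iff_le hi hm).mp (hmx ▸ hix)⟩

end TTrace

section BoundedOperators

variable {S : Type*} {π : TTrace S} {Φ : TraceProp S}

theorem xle_iff_of_isGreatest {a : ℝ} {m : ℕ}
    (hm : IsGreatest {i | i ≤ π.n ∧ π.t i ≤ π.t 0 + a} m) :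
    Xle a Φ π ↔ Φ (π.suffix m) := by
  classical
  have hfind : Nat.findGreatest (fun i => π.t i ≤ π.t 0 + a) π.n = m :=
    Nat.findGreatest_eq_iff.mpr
      ⟨hm.1.1, fun _ => hm.1.2, fun _ hmj hj htj => hmj.not_ge (hm.2 ⟨hj, htj⟩)⟩
  rw [← hfind, Xle]

theorem xle_suffix_iff {a : ℝ} {i m : ℕ} (him : i ≤ m) (hm : m ≤ π.n)
    (htm : π.t m = π.t i + a) :
    Xle a Φ (π.suffix i) ↔ Φ (π.suffix m) := by
  obtain ⟨d, rfl⟩ := Nat.exists_eq_add_of_le him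
  rw [← π.suffix_suffix]
  exact xle_iff_of_isGreatest
    ((π.suffix i).isGreatest_of_t_eq (Nat.le_sub_of_add_le' hm) htm)

theorem gle_suffix_iff {c : ℝ} {i : ℕ} (hi : i ≤ π.n) :
    Gle c Φ (π.suffix i) ↔
      ∀ j, j ≤ π.n → π.t i ≤ π.t j → π.t j ≤ π.t i + c → Φ (π.suffix j) := by
  constructor
  · intro hG j hj hij htj
    obtain ⟨d, rfl⟩ := Nat.exists_eq_add_of_le ((π.strictMonoOn_t.le_iff_le hi hj).mp hij)
    rw [← π.suffix_suffix]
    exact hG d (Nat.le_sub_of_add_le' hj) htj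
  · intro hΦ d hd htd
    have hid : i + d ≤ π.n := Nat.add_le_of_le_sub' hi hd
    rw [π.suffix_suffix]
    exact hΦ (i + d) hid (π.strictMonoOn_t.monotoneOn hi hid (Nat.le_add_right i d)) htd

-- A sample at time `t i + a` makes `X_{≤a}` land exactly on the left end of the window, so that
-- `G_{≤b-a}` from there reaches exactly its right end.
theorem xle_gle_suffix_iff {a b : ℝ} {i m : ℕ} (ha : 0 ≤ a) (hi : i ≤ π.n) (hm : m ≤ π.n)
    (htm : π.t m = π.t i + a) :
    Xle a (Gle (b - a) Φ) (π.suffix i) ↔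
      ∀ j, j ≤ π.n → π.t i + a ≤ π.t j → π.t j ≤ π.t i + b → Φ (π.suffix j) := by
  have him : i ≤ m := (π.strictMonoOn_t.le_iff_le hi hm).mp (by linarith)
  have hright : π.t i + a + (b - a) = π.t i + b := by ring
  rw [xle_suffix_iff him hm htm, gle_suffix_iff hm, htm, hright]

end BoundedOperators

theorem pattern_sliding_implies_during_general {S : Type*} (π : TTrace S) (Θ Φ : TraceProp S)
    {a b c : ℝ} (ha : 0 ≤ a)
    (hm : ∀ i, i ≤ π.n → π.t i ≤ π.t 0 + c → Θ (π.suffix i) →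
      ∃ m, m ≤ π.n ∧ π.t m = π.t i + a) :
    Gle c (pImp Θ (Xle a (Gle (b - a) Φ))) π ↔
      ∀ i, i ≤ π.n → π.t i ≤ π.t 0 + c → Θ (π.suffix i) →
        ∀ j, j ≤ π.n → π.t i + a ≤ π.t j → π.t j ≤ π.t i + b → Φ (π.suffix j) := by
  refine forall₄_congr fun i hi hti hΘ => ?_
  obtain ⟨m, hmn, htm⟩ := hm i hi hti hΘ
  exact xle_gle_suffix_iff ha hi hmn htm

/-- translation correctness for the sliding-interval pattern
'whenever Ψ occurs, Ψ1 implies Ψ2 during following [a,b]':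
`π ⊨ G_{≤k−b}(Ψ ⟹ X_{≤a} G_{≤b−a} (Ψ1 ⟹ Ψ2))` iff for every index `i` with
`t i ≤ t 0 + (k − b)` at which `Ψ (s i)` holds, every index `j` with
`t i + a ≤ t j ≤ t i + b` satisfies `Ψ1 (s j) → Ψ2 (s j)`. -/
theorem pattern_sliding_implies_during {S : Type*} (π : TTrace S)
    (Ψ Ψ1 Ψ2 : S → Prop) (a b k : ℝ) (ha : 0 ≤ a) (hab : a ≤ b) (hbk : b ≤ k)
    (hm : ∀ i, i ≤ π.n → π.t i ≤ π.t 0 + (k - b) →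
            ∃ m, m ≤ π.n ∧ π.t m = π.t i + a) :
    Gle (k - b) (pImp (statePred Ψ)
        (Xle a (Gle (b - a) (pImp (statePred Ψ1) (statePred Ψ2))))) π ↔
      ∀ i, i ≤ π.n → π.t i ≤ π.t 0 + (k - b) → Ψ (π.s i) →
        ∀ j, j ≤ π.n → π.t i + a ≤ π.t j → π.t j ≤ π.t i + b →
          (Ψ1 (π.s j) → Ψ2 (π.s j)) :=
  pattern_sliding_implies_during_general π (statePred Ψ) (pImp (statePred Ψ1) (statePred Ψ2)) ha
    fun i hi hti _ => hm i hi hti
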